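/- For each ε ∈ {+1, −1}, let Φ_ε = 1⊗1⊗1 + (ε − 1)·e1⊗e1⊗e1 ∈ Q⊗Q⊗Q, where e1 = (1 − K²)/2. Then there is no invertible element R ∈ Q⊗Q such that R·Δ(a) = Δ^op(a)·R for all a ∈ Q and both hexagon identities relative to Φ_ε hold: (Δ⊗id)(R) = (Φ_ε)₂₃₁^{-1}·R₁₃·(Φ_ε)₁₃₂·R₂₃·Φ_ε^{-1} and (id⊗Δ)(R) = (Φ_ε)₃₁₂·R₁₃·(Φ_ε)₂₁₃^{-1}·R₁₂·Φ_ε. That is, the quasi-bialgebra (Q, Φ_ε) is not quasi-triangular for either choice of ε. -/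

import Mathlib

open TensorProduct

set_option maxHeartbeats 1000000
set_option synthInstance.maxHeartbeats 400000

noncomputable section

/-- Generators of the restricted quantum group `Q = \bar U_i sl(2)`. -/
inductive QGen : Type
  | E | F | K | Kinv
deriving DecidableEq

/-- The free algebra on the generators. -/
abbrev FA : Type := FreeAlgebra ℂ QGen

def ιE : FA := FreeAlgebra.ι ℂ QGen.E
def ιF : FA := FreeAlgebra.ι ℂ QGen.F
def ιK : FA := FreeAlgebra.ι ℂ QGen.K
def ιKi : FA := FreeAlgebra.ι ℂ QGen.Kinv

/-- Defining relations of `\bar U_i sl(2)` (at `q = i`, i.e. `p = 2`). -/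
inductive QRel : FA → FA → Prop
  | KKi : QRel (ιK * ιKi) 1
  | KiK : QRel (ιKi * ιK) 1
  | KEKi : QRel (ιK * ιE * ιKi) (-ιE)
  | KFKi : QRel (ιK * ιF * ιKi) (-ιF)
  | EF : QRel (ιE * ιF - ιF * ιE) ((2 * Complex.I)⁻¹ • (ιK - ιKi))
  | Esq : QRel (ιE ^ 2) 0
  | Fsq : QRel (ιF ^ 2) 0
  | K4 : QRel (ιK ^ 4) 1

/-- The restricted quantum group `\bar U_i sl(2)`: the quotient of the free algebra
by the two-sided ideal generated by the defining relations. -/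
abbrev Q : Type := RingQuot QRel

def gE : Q := RingQuot.mkAlgHom ℂ QRel ιE
def gF : Q := RingQuot.mkAlgHom ℂ QRel ιF
def gK : Q := RingQuot.mkAlgHom ℂ QRel ιK
def gKi : Q := RingQuot.mkAlgHom ℂ QRel ιKi

section Gadgets

variable (k : Type) [Field k] (A : Type) [Ring A] [Algebra k A]

abbrev TP2 : Type := A ⊗[k] A
abbrev TP3 : Type := A ⊗[k] (A ⊗[k] A)
abbrev TP4 : Type := A ⊗[k] (A ⊗[k] (A ⊗[k] A))

/-- Multiplication `a ⊗ b ↦ a * b`. -/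
def mulA : TP2 k A →ₗ[k] A := LinearMap.mul' k A

/-- Tensor flip `a ⊗ b ↦ b ⊗ a`. -/
def flipA : TP2 k A →ₗ[k] TP2 k A := (TensorProduct.comm k A A).toLinearMap

/-- `a ↦ a ⊗ 1`. -/
def lTen : A →ₗ[k] TP2 k A := (TensorProduct.mk k A A).flip 1

/-- `a ↦ 1 ⊗ a`. -/
def rTen : A →ₗ[k] TP2 k A := TensorProduct.mk k A A 1

/-- `a ⊗ b ↦ a ⊗ b ⊗ 1`. -/
def emb12 : TP2 k A →ₗ[k] TP3 k A := TensorProduct.map LinearMap.id (lTen k A)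

/-- `a ⊗ b ↦ a ⊗ 1 ⊗ b`. -/
def emb13 : TP2 k A →ₗ[k] TP3 k A := TensorProduct.map LinearMap.id (rTen k A)

/-- `a ⊗ b ↦ 1 ⊗ a ⊗ b`. -/
def emb23 : TP2 k A →ₗ[k] TP3 k A := TensorProduct.mk k A (TP2 k A) 1

/-- `a ⊗ b ⊗ c ↦ a ⊗ c ⊗ b`. -/
def perm132 : TP3 k A →ₗ[k] TP3 k A := TensorProduct.map LinearMap.id (flipA k A)

/-- `a ⊗ b ⊗ c ↦ b ⊗ c ⊗ a`. -/
def perm231 : TP3 k A →ₗ[k] TP3 k A :=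
  (TensorProduct.assoc k A A A).toLinearMap ∘ₗ (TensorProduct.comm k A (TP2 k A)).toLinearMap

/-- `a ⊗ b ⊗ c ↦ c ⊗ a ⊗ b`. -/
def perm312 : TP3 k A →ₗ[k] TP3 k A :=
  (TensorProduct.comm k (TP2 k A) A).toLinearMap ∘ₗ (TensorProduct.assoc k A A A).symm.toLinearMap

/-- `a ⊗ b ⊗ c ↦ b ⊗ a ⊗ c`. -/
def perm213 : TP3 k A →ₗ[k] TP3 k A :=
  (TensorProduct.assoc k A A A).toLinearMap ∘ₗ
    (TensorProduct.map (flipA k A) LinearMap.id) ∘ₗ (TensorProduct.assoc k A A A).symm.toLinearMap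

variable {k A}

/-- `(Δ ⊗ id)` on two tensor factors, landing in the triple tensor product. -/
def copL (D : A →ₐ[k] TP2 k A) : TP2 k A →ₗ[k] TP3 k A :=
  (TensorProduct.assoc k A A A).toLinearMap ∘ₗ TensorProduct.map D.toLinearMap LinearMap.id

/-- `(id ⊗ Δ)` on two tensor factors. -/
def copR (D : A →ₐ[k] TP2 k A) : TP2 k A →ₗ[k] TP3 k A :=
  TensorProduct.map LinearMap.id D.toLinearMap

/-- `(ε ⊗ id) : A ⊗ A → A`. -/
def cuL (ce : A →ₐ[k] k) : TP2 k A →ₗ[k] A :=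
  (TensorProduct.lid k A).toLinearMap ∘ₗ TensorProduct.map ce.toLinearMap LinearMap.id

/-- `(id ⊗ ε) : A ⊗ A → A`. -/
def cuR (ce : A →ₐ[k] k) : TP2 k A →ₗ[k] A :=
  (TensorProduct.rid k A).toLinearMap ∘ₗ TensorProduct.map LinearMap.id ce.toLinearMap

/-- `(id ⊗ ε ⊗ id) : A ⊗ A ⊗ A → A ⊗ A`. -/
def cuMid (ce : A →ₐ[k] k) : TP3 k A →ₗ[k] TP2 k A :=
  TensorProduct.map LinearMap.id (cuL ce)

/-- `(Δ ⊗ id ⊗ id)`. -/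
def cop4_1 (D : A →ₐ[k] TP2 k A) : TP3 k A →ₗ[k] TP4 k A :=
  (TensorProduct.assoc k A A (TP2 k A)).toLinearMap ∘ₗ TensorProduct.map D.toLinearMap LinearMap.id

/-- `(id ⊗ Δ ⊗ id)`. -/
def cop4_2 (D : A →ₐ[k] TP2 k A) : TP3 k A →ₗ[k] TP4 k A :=
  TensorProduct.map LinearMap.id (copL D)

/-- `(id ⊗ id ⊗ Δ)`. -/
def cop4_3 (D : A →ₐ[k] TP2 k A) : TP3 k A →ₗ[k] TP4 k A :=
  TensorProduct.map LinearMap.id (copR D)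

/-- `a ⊗ b ⊗ c ↦ a ⊗ b ⊗ c ⊗ 1`, i.e. `Φ ↦ Φ ⊗ 1`. -/
def pad4 : TP3 k A →ₗ[k] TP4 k A :=
  TensorProduct.map LinearMap.id (TensorProduct.map LinearMap.id (lTen k A))

/-- `a ⊗ b ⊗ c ↦ f(a) * g(b) * h(c)`. -/
def tmap3 (f g h : A →ₗ[k] A) : TP3 k A →ₗ[k] A :=
  mulA k A ∘ₗ TensorProduct.map f (mulA k A ∘ₗ TensorProduct.map g h)

/-- `a ⊗ b ↦ S(a) * b`, used in the antipode axiom `m ∘ (S ⊗ id) ∘ Δ = 1·ε`. -/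
def antipL (s : A →ₗ[k] A) : TP2 k A →ₗ[k] A := mulA k A ∘ₗ TensorProduct.map s LinearMap.id

/-- `a ⊗ b ↦ a * S(b)`. -/
def antipR (s : A →ₗ[k] A) : TP2 k A →ₗ[k] A := mulA k A ∘ₗ TensorProduct.map LinearMap.id s

end Gadgets

/-- Central idempotent `e₀ = (1 + K²)/2`. -/
def e0 : Q := (2:ℂ)⁻¹ • (1 + gK ^ 2)

/-- Central idempotent `e₁ = (1 − K²)/2`. -/
def e1 : Q := (2:ℂ)⁻¹ • (1 - gK ^ 2)

/-- `f⁺ = −i F`. -/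
def fp : Q := (-Complex.I) • gF

/-- `f⁻ = E K⁻¹`. -/
def fm : Q := gE * gKi

/-- The Casimir element `C = FE − (i/4)(K − K⁻¹)`. -/
def Cas : Q := gF * gE - (Complex.I / 4) • (gK - gKi)

def t2 (a b : Q) : TP2 ℂ Q := a ⊗ₜ[ℂ] b

def t3 (a b c : Q) : TP3 ℂ Q := a ⊗ₜ[ℂ] (b ⊗ₜ[ℂ] c)

def eEF : Q := gE * gF
def eEK : Q := gE * gK
def eFK : Q := gF * gK
def eEFK : Q := gE * gF * gK

/-- `Φ^{010}` component of the coassociator. -/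
def Phi010 : TP3 ℂ Q :=
  t3 1 1 1 - (1 + Complex.I) • t3 gE gK gF + (1 - Complex.I) • t3 eFK gK eEK
    + (2:ℂ) • t3 eEFK 1 eEFK

/-- `Φ^{101}` component of the coassociator. -/
def Phi101 : TP3 ℂ Q :=
  (Complex.I - 1) • t3 1 gF eEK + t3 1 gK 1 + (2:ℂ) • t3 1 eEF eEFK
    - (1 + Complex.I) • t3 1 eEK gF - (1 + Complex.I) • t3 gE eFK 1
    + (2 * Complex.I) • t3 gE eEFK gF + (1 - Complex.I) • t3 eFK gE 1
    - (2 * Complex.I) • t3 eFK eEFK eEK - (2:ℂ) • t3 eEFK eEF 1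

/-- `Φ^{111}` component of the coassociator. -/
def Phi111 (β : ℂ) : TP3 ℂ Q :=
  (Complex.I * β ^ 2) • (
    (1 + Complex.I) • t3 1 gF eEK - t3 1 gK 1 - (2:ℂ) • t3 1 eEF 1
      - (2 * Complex.I) • t3 1 eEF eEFK + (1 + Complex.I) • t3 1 eEK gF
      - (1 + Complex.I) • t3 gE 1 gF + (1 + Complex.I) • t3 gE eFK 1
      + (2 * Complex.I) • t3 gE eFK eEFK + (2:ℂ) • t3 gE eEFK gF
      - (1 + Complex.I) • t3 eFK 1 eEK + (1 + Complex.I) • t3 eFK gE 1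
      + (2 * Complex.I) • t3 eFK gE eEFK + (2:ℂ) • t3 eFK eEFK eEK
      + (2 * Complex.I) • t3 eEFK gF eEK + (2 * Complex.I) • t3 eEFK gK eEFK
      - (2 * Complex.I) • t3 eEFK eEF 1 + (2 * Complex.I) • t3 eEFK eEK gF
      + (4:ℂ) • t3 eEFK eEF eEFK)

/-- The coassociator `Φ` of the quasi-Hopf algebra structure on `Q`. -/
def Phi (β : ℂ) : TP3 ℂ Q :=
  t3 e0 e0 e0 + t3 e1 e0 e0 + Phi010 * t3 e0 e1 e0 + t3 e0 e0 e1
    + t3 e1 e1 e0 + Phi101 * t3 e1 e0 e1 + t3 e0 e1 e1 + Phi111 β * t3 e1 e1 e1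

def R00 : TP2 ℂ Q :=
  (2:ℂ)⁻¹ • ((t2 1 1 + t2 1 gK + t2 gK 1 - t2 gK gK) * (t2 1 1 + (2 * Complex.I) • t2 gE gF))

def R01 : TP2 ℂ Q :=
  (2:ℂ)⁻¹ • ((t2 1 1 - Complex.I • t2 1 gK + t2 gK 1 + Complex.I • t2 gK gK) *
    (t2 1 1 + (1 - Complex.I) • t2 eFK eEK - (1 - Complex.I) • t2 gE gF
      + (1 + Complex.I) • t2 eEFK 1 + (2 * Complex.I) • t2 eEFK eEFK))

def R10 : TP2 ℂ Q :=
  (2:ℂ)⁻¹ • ((t2 1 1 + t2 1 gK - Complex.I • t2 gK 1 + Complex.I • t2 gK gK) *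
    (t2 1 gK + (1 - Complex.I) • t2 eFK gE + (1 - Complex.I) • t2 gE eFK
      - (1 - Complex.I) • t2 1 eEF - (2 * Complex.I) • t2 eEFK eEF))

def R11 (β : ℂ) : TP2 ℂ Q :=
  (β / 2) • ((t2 1 1 - Complex.I • t2 1 gK - Complex.I • t2 gK 1 + t2 gK gK) *
    ((-Complex.I) • t2 gK 1 + (2 * Complex.I) • t2 eEK gF + (1 - Complex.I) • t2 gK eEFK
      - (1 + Complex.I) • t2 eEF 1 - (2 * Complex.I) • t2 eEF eEFK))

/-- The universal R-matrix `R` of the quasi-triangular quasi-Hopf structure on `Q`. -/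
def Rmat (β : ℂ) : TP2 ℂ Q :=
  R00 * t2 e0 e0 + R01 * t2 e0 e1 + R10 * t2 e1 e0 + R11 β * t2 e1 e1

/-- The standard R-matrix `R_st` of the quotient `Q/(K²-1)`. -/
def Rst : TP2 ℂ Q :=
  (2:ℂ)⁻¹ • ∑ m ∈ Finset.range 2, ∑ n ∈ Finset.range 2,
    ((-1:ℂ) ^ (m * n)) • (t2 (gK ^ m) (gK ^ n) * (t2 1 1 + (2 * Complex.I) • t2 gE gF))

/-- The monodromy matrix `M = R₂₁ · R`. -/
def Mmat (β : ℂ) : TP2 ℂ Q := flipA ℂ Q (Rmat β) * Rmat β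

/-- The ribbon element `v = (e₀ − iβ K e₁)(1 − 2 f⁺ f⁻)`. -/
def vRib (β : ℂ) : Q := (e0 - (Complex.I * β) • (gK * e1)) * (1 - (2:ℂ) • (fp * fm))

/-- The coevaluation element `β = e₀ − 2iβ² C e₁`. -/
def bbEl (β : ℂ) : Q := e0 - (2 * Complex.I * β ^ 2) • (Cas * e1)

/-- `b ⊗ c ↦ S(b · bb · S(c))`, inner part of the Drinfeld element. -/
def uInner (S : Q →ₗ[ℂ] Q) (bb : Q) : TP2 ℂ Q →ₗ[ℂ] Q :=
  S ∘ₗ mulA ℂ Q ∘ₗ TensorProduct.map (LinearMap.mulRight ℂ bb) S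

/-- `Φ' ⊗ Φ'' ⊗ Φ''' ↦ S(Φ'' · bb · S(Φ''')) ⊗ Φ'`. -/
def uMap1 (S : Q →ₗ[ℂ] Q) (bb : Q) : TP3 ℂ Q →ₗ[ℂ] TP2 ℂ Q :=
  TensorProduct.map (uInner S bb) LinearMap.id ∘ₗ (TensorProduct.comm ℂ Q (TP2 ℂ Q)).toLinearMap

/-- `R' ⊗ R'' ↦ S(R'') · al · R'`. -/
def uMap2 (S : Q →ₗ[ℂ] Q) (al : Q) : TP2 ℂ Q →ₗ[ℂ] Q :=
  mulA ℂ Q ∘ₗ TensorProduct.map (LinearMap.mulRight ℂ al ∘ₗ S) LinearMap.id ∘ₗ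
    (TensorProduct.comm ℂ Q Q).toLinearMap

/-- `(x ⊗ a) ⊗ (R' ⊗ R'') ↦ x · (S(R'') · al · R') · a`. -/
def uBig (S : Q →ₗ[ℂ] Q) (al : Q) : TP2 ℂ Q ⊗[ℂ] TP2 ℂ Q →ₗ[ℂ] Q :=
  mulA ℂ Q ∘ₗ TensorProduct.map LinearMap.id (mulA ℂ Q ∘ₗ (TensorProduct.comm ℂ Q Q).toLinearMap)
    ∘ₗ (TensorProduct.assoc ℂ Q Q Q).toLinearMap ∘ₗ TensorProduct.map LinearMap.id (uMap2 S al)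

/-- The Drinfeld element `u = Σ S(Φ''·b·S(Φ'''))·S(R'')·α·R'·Φ'` (with `α = 1`). -/
def uDrin (β : ℂ) (S : Q →ₗ[ℂ] Q) : Q :=
  uBig S 1 (uMap1 S (bbEl β) (Phi β) ⊗ₜ[ℂ] Rmat β)

/-- The balancing element `g = b · S(α) · v⁻¹ · u` (with `α = 1`). -/
def balG (β : ℂ) (S : Q →ₗ[ℂ] Q) : Q :=
  bbEl β * S 1 * Ring.inverse (vRib β) * uDrin β S

/-- The cointegral `c = (β²/i)·E·F·(1 + K + K² + K³)`. -/
def cInt (β : ℂ) : Q := (β ^ 2 / Complex.I) • (gE * gF * (1 + gK + gK ^ 2 + gK ^ 3))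

/-- The q-trace of a one-dimensional representation, with balancing element `K⁻¹`. -/
def qTr1 (ρ : Q →ₐ[ℂ] ℂ) : Q →ₗ[ℂ] ℂ := ρ.toLinearMap ∘ₗ LinearMap.mulLeft ℂ gK

/-- The q-trace of a two-dimensional (matrix) representation, with balancing element `K⁻¹`. -/
def qTrM (ρ : Q →ₐ[ℂ] Matrix (Fin 2) (Fin 2) ℂ) : Q →ₗ[ℂ] ℂ :=
  Matrix.traceLinearMap (Fin 2) ℂ ℂ ∘ₗ ρ.toLinearMap ∘ₗ LinearMap.mulLeft ℂ gK

/-- The Drinfeld mapping `φ ↦ (φ ⊗ id)(M)`. -/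
def drinfeldImg (β : ℂ) (φ : Q →ₗ[ℂ] ℂ) : Q :=
  (TensorProduct.lid ℂ Q) (TensorProduct.map φ LinearMap.id (Mmat β))

/-! ### Helper material -/

/-- Two by two complex matrices. -/
abbrev M2 : Type := Matrix (Fin 2) (Fin 2) ℂ

lemma gK_mul_gKi : gK * gKi = 1 := by
  have := RingQuot.mkAlgHom_rel ℂ QRel.KKi
  simpa [gK, gKi] using this

lemma gKi_mul_gK : gKi * gK = 1 := by
  have := RingQuot.mkAlgHom_rel ℂ QRel.KiK
  simpa [gK, gKi] using this

lemma gK_pow_four : gK ^ 4 = 1 := by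
  have := RingQuot.mkAlgHom_rel ℂ QRel.K4
  simpa [gK] using this

lemma gKi_eq : gKi = gK ^ 3 := by
  calc gKi = gKi * gK ^ 4 := by rw [gK_pow_four, mul_one]
    _ = (gKi * gK) * gK ^ 3 := by rw [pow_succ' gK 3, mul_assoc]
    _ = gK ^ 3 := by rw [gKi_mul_gK, one_mul]

/-- Induction principle for `Q`. -/
lemma Q_induction {P : Q → Prop} (hs : ∀ c : ℂ, P (algebraMap ℂ Q c))
    (hE : P gE) (hF : P gF) (hK : P gK)
    (ha : ∀ a b, P a → P b → P (a + b)) (hm : ∀ a b, P a → P b → P (a * b)) (y : Q) : P y := by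
  obtain ⟨x, rfl⟩ := RingQuot.mkAlgHom_surjective ℂ QRel y
  induction x using FreeAlgebra.induction with
  | grade0 r => rw [AlgHom.commutes]; exact hs r
  | grade1 g =>
    cases g with
    | E => exact hE
    | F => exact hF
    | K => exact hK
    | Kinv =>
      have h : P gKi := by
        rw [gKi_eq, pow_succ, pow_two]
        exact hm _ _ (hm _ _ hK hK) hK
      exact h
  | mul a b h1 h2 => rw [map_mul]; exact hm _ _ h1 h2
  | add a b h1 h2 => rw [map_add]; exact ha _ _ h1 h2

lemma Q_hom_ext {B : Type*} [Semiring B] [Algebra ℂ B] (f g : Q →ₐ[ℂ] B)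
    (hE : f gE = g gE) (hF : f gF = g gF) (hK : f gK = g gK) : f = g := by
  refine AlgHom.ext fun y => ?_
  refine Q_induction (P := fun y => f y = g y) (fun c => ?_) hE hF hK ?_ ?_ y
  · simp only [AlgHom.commutes]
  · intro a b h1 h2; simp only [map_add, h1, h2]
  · intro a b h1 h2; simp only [map_mul, h1, h2]

/-- One-dimensional representations with `K ↦ c`, `c² = 1`. -/
lemma exists_char (c : ℂ) (hc : c * c = 1) :
    ∃ χ : Q →ₐ[ℂ] ℂ, χ gE = 0 ∧ χ gF = 0 ∧ χ gK = c ∧ χ gKi = c := by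
  let f : FA →ₐ[ℂ] ℂ := FreeAlgebra.lift ℂ (fun g => match g with
    | QGen.E => 0 | QGen.F => 0 | QGen.K => c | QGen.Kinv => c)
  have fE : f ιE = 0 := by simp [f, ιE]
  have fF : f ιF = 0 := by simp [f, ιF]
  have fK : f ιK = c := by simp [f, ιK]
  have fKi : f ιKi = c := by simp [f, ιKi]
  have w : ∀ ⦃x y⦄, QRel x y → f x = f y := by
    intro x y h
    cases h <;> simp [fE, fF, fK, fKi, hc]
    · rw [show c ^ 4 = (c * c) * (c * c) by ring, hc, one_mul]
  refine ⟨RingQuot.liftAlgHom ℂ ⟨f, w⟩, ?_, ?_, ?_, ?_⟩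
  · rw [gE, RingQuot.liftAlgHom_mkAlgHom_apply, fE]
  · rw [gF, RingQuot.liftAlgHom_mkAlgHom_apply, fF]
  · rw [gK, RingQuot.liftAlgHom_mkAlgHom_apply, fK]
  · rw [gKi, RingQuot.liftAlgHom_mkAlgHom_apply, fKi]

/-- The two-dimensional simple representation with highest weight `i`. -/
lemma exists_rep : ∃ ρ : Q →ₐ[ℂ] M2, ρ gE = !![0, 1; 0, 0] ∧ ρ gF = !![0, 0; 1, 0] ∧
    ρ gK = !![Complex.I, 0; 0, -Complex.I] ∧ ρ gKi = !![-Complex.I, 0; 0, Complex.I] := by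
  let f : FA →ₐ[ℂ] M2 := FreeAlgebra.lift ℂ (fun g => match g with
    | QGen.E => !![0, 1; 0, 0] | QGen.F => !![0, 0; 1, 0]
    | QGen.K => !![Complex.I, 0; 0, -Complex.I] | QGen.Kinv => !![-Complex.I, 0; 0, Complex.I])
  have fE : f ιE = !![0, 1; 0, 0] := by simp [f, ιE]
  have fF : f ιF = !![0, 0; 1, 0] := by simp [f, ιF]
  have fK : f ιK = !![Complex.I, 0; 0, -Complex.I] := by simp [f, ιK]
  have fKi : f ιKi = !![-Complex.I, 0; 0, Complex.I] := by simp [f, ιKi]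
  have w : ∀ ⦃x y⦄, QRel x y → f x = f y := by
    intro x y h
    cases h
    case EF =>
      simp only [map_sub, map_mul, map_smul, fE, fF, fK, fKi]
      ext i j
      fin_cases i <;> fin_cases j <;> simp <;> field_simp <;> norm_num
    all_goals
      simp only [map_mul, map_neg, map_one, map_zero, fE, fF, fK, fKi, pow_succ, pow_zero,
        one_mul]
      ext i j
      fin_cases i <;> fin_cases j <;> simp
  refine ⟨RingQuot.liftAlgHom ℂ ⟨f, w⟩, ?_, ?_, ?_, ?_⟩
  · rw [gE, RingQuot.liftAlgHom_mkAlgHom_apply, fE]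
  · rw [gF, RingQuot.liftAlgHom_mkAlgHom_apply, fF]
  · rw [gK, RingQuot.liftAlgHom_mkAlgHom_apply, fK]
  · rw [gKi, RingQuot.liftAlgHom_mkAlgHom_apply, fKi]

/-- `a ⊗ b` acts on a matrix `S` by `ρ(a) S ρ(b)ᵀ`. -/
lemma exists_act (ρ : Q →ₐ[ℂ] M2) : ∃ A : TP2 ℂ Q →ₐ[ℂ] Module.End ℂ M2,
    ∀ (a b : Q) (S : M2), A (a ⊗ₜ[ℂ] b) S = ρ a * S * (ρ b).transpose := by
  let f : Q →ₐ[ℂ] Module.End ℂ M2 := (Algebra.lmul ℂ M2).comp ρ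
  let g : Q →ₐ[ℂ] Module.End ℂ M2 :=
    ((Algebra.lsmul ℂ ℂ M2 : M2ᵐᵒᵖ →ₐ[ℂ] Module.End ℂ M2).comp
      (Matrix.transposeAlgEquiv (Fin 2) ℂ ℂ).toAlgHom).comp ρ
  have hf : ∀ a S, f a S = ρ a * S := fun a S => rfl
  have hg : ∀ a S, g a S = S * (ρ a).transpose := fun a S => rfl
  have hc : ∀ x y, Commute (f x) (g y) := by
    intro x y
    refine LinearMap.ext fun S => ?_
    rw [Module.End.mul_apply, Module.End.mul_apply, hf, hg, hf, hg, mul_assoc]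
  refine ⟨Algebra.TensorProduct.lift f g hc, ?_⟩
  intro a b S
  have h : Algebra.TensorProduct.lift f g hc (a ⊗ₜ[ℂ] b) = f a * g b :=
    Algebra.TensorProduct.lift_tmul f g hc a b
  rw [h, Module.End.mul_apply, hf, hg, mul_assoc]

/-- `id ⊗ χ : Q ⊗ Q → Q`. -/
def PP (χ : Q →ₐ[ℂ] ℂ) : TP2 ℂ Q →ₐ[ℂ] Q :=
  (Algebra.TensorProduct.rid ℂ ℂ Q).toAlgHom.comp (Algebra.TensorProduct.map (AlgHom.id ℂ Q) χ)

lemma PP_tmul (χ : Q →ₐ[ℂ] ℂ) (a b : Q) : PP χ (a ⊗ₜ[ℂ] b) = χ b • a := by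
  simp [PP]

/-- `id ⊗ id ⊗ χ : Q ⊗ Q ⊗ Q → Q ⊗ Q`. -/
def GG (χ : Q →ₐ[ℂ] ℂ) : TP3 ℂ Q →ₐ[ℂ] TP2 ℂ Q :=
  Algebra.TensorProduct.map (AlgHom.id ℂ Q) (PP χ)

lemma GG_tmul (χ : Q →ₐ[ℂ] ℂ) (a b c : Q) :
    GG χ (a ⊗ₜ[ℂ] (b ⊗ₜ[ℂ] c)) = χ c • (a ⊗ₜ[ℂ] b) := by
  simp [GG, PP_tmul]

lemma GG_copL (χ : Q →ₐ[ℂ] ℂ) (Δ : Q →ₐ[ℂ] TP2 ℂ Q) (R : TP2 ℂ Q) :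
    GG χ (copL Δ R) = Δ (PP χ R) := by
  induction R using TensorProduct.induction_on with
  | zero => simp
  | add a b h1 h2 => simp only [map_add, h1, h2]
  | tmul a b =>
    rw [PP_tmul, map_smul]
    have h : copL Δ (a ⊗ₜ[ℂ] b) = TensorProduct.assoc ℂ Q Q Q (Δ a ⊗ₜ[ℂ] b) := by
      simp [copL]
    rw [h]
    induction Δ a using TensorProduct.induction_on with
    | zero => simp
    | add u v h1 h2 => simp only [TensorProduct.add_tmul, map_add, h1, h2, smul_add]
    | tmul u v => rw [TensorProduct.assoc_tmul, GG_tmul]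

lemma GG_emb13 (χ : Q →ₐ[ℂ] ℂ) (R : TP2 ℂ Q) :
    GG χ (emb13 ℂ Q R) = PP χ R ⊗ₜ[ℂ] (1 : Q) := by
  induction R using TensorProduct.induction_on with
  | zero => simp
  | add a b h1 h2 => simp only [map_add, h1, h2, TensorProduct.add_tmul]
  | tmul a b => simp [emb13, rTen, GG_tmul, PP_tmul, TensorProduct.smul_tmul']

lemma GG_emb23 (χ : Q →ₐ[ℂ] ℂ) (R : TP2 ℂ Q) :
    GG χ (emb23 ℂ Q R) = (1 : Q) ⊗ₜ[ℂ] PP χ R := by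
  induction R using TensorProduct.induction_on with
  | zero => simp
  | add a b h1 h2 => simp only [map_add, h1, h2, TensorProduct.tmul_add]
  | tmul a b => simp [emb23, GG_tmul, PP_tmul]

lemma GG_emb12 (χ : Q →ₐ[ℂ] ℂ) (R : TP2 ℂ Q) : GG χ (emb12 ℂ Q R) = R := by
  induction R using TensorProduct.induction_on with
  | zero => simp
  | add a b h1 h2 => simp only [map_add, h1, h2]
  | tmul a b => simp [emb12, lTen, GG_tmul]

/-- `χ ∘ (id ⊗ χ)` applied to `Δ`. -/
lemma PP_GG_copR (χ χ' : Q →ₐ[ℂ] ℂ) (Δ : Q →ₐ[ℂ] TP2 ℂ Q) (h : ∀ a, χ (PP χ (Δ a)) = χ' a)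
    (R : TP2 ℂ Q) : PP χ (GG χ (copR Δ R)) = PP χ' R := by
  induction R using TensorProduct.induction_on with
  | zero => simp
  | add a b h1 h2 => simp only [map_add, h1, h2]
  | tmul a b => simp [copR, GG, PP_tmul, h]

lemma e1_idem : e1 * e1 = e1 := by
  have h : (1 - gK ^ 2) * (1 - gK ^ 2) = (2 : ℂ) • (1 - gK ^ 2) := by
    have h4 : gK ^ 2 * gK ^ 2 = 1 := by rw [← pow_add]; exact gK_pow_four
    rw [sub_mul, mul_sub, mul_sub, h4, two_smul]
    simp only [one_mul, mul_one]
    abel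
  rw [e1, smul_mul_smul_comm, h, smul_smul]
  norm_num

lemma PhiE_sq (ep : ℂ) (hep : ep = 1 ∨ ep = -1) :
    ((1 : TP3 ℂ Q) + (ep - 1) • t3 e1 e1 e1) * (1 + (ep - 1) • t3 e1 e1 e1) = 1 := by
  have ht : t3 e1 e1 e1 * t3 e1 e1 e1 = t3 e1 e1 e1 := by
    simp [t3, Algebra.TensorProduct.tmul_mul_tmul, e1_idem]
  have h2 : ep * ep = 1 := by rcases hep with rfl | rfl <;> norm_num
  rw [add_mul, mul_add, mul_add, smul_mul_smul_comm, ht]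
  simp only [one_mul, mul_one]
  rw [add_assoc, ← add_smul, ← add_smul,
    show (ep - 1) + ((ep - 1) + (ep - 1) * (ep - 1)) = ep * ep - 1 by ring, h2]
  simp

lemma inverse_self_of_sq (X : TP3 ℂ Q) (h : X * X = 1) : Ring.inverse X = X := by
  exact Ring.inverse_unit (⟨X, X, h, h⟩ : (TP3 ℂ Q)ˣ)

lemma perms_Phi (ep : ℂ) :
    perm231 ℂ Q (1 + (ep - 1) • t3 e1 e1 e1) = 1 + (ep - 1) • t3 e1 e1 e1 ∧
    perm132 ℂ Q (1 + (ep - 1) • t3 e1 e1 e1) = 1 + (ep - 1) • t3 e1 e1 e1 ∧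
    perm312 ℂ Q (1 + (ep - 1) • t3 e1 e1 e1) = 1 + (ep - 1) • t3 e1 e1 e1 ∧
    perm213 ℂ Q (1 + (ep - 1) • t3 e1 e1 e1) = 1 + (ep - 1) • t3 e1 e1 e1 := by
  refine ⟨?_, ?_, ?_, ?_⟩ <;>
    simp [perm231, perm132, perm312, perm213, flipA, t3, Algebra.TensorProduct.one_def]

lemma GG_Phi (χ : Q →ₐ[ℂ] ℂ) (h : χ gK * χ gK = 1) (ep : ℂ) :
    GG χ (1 + (ep - 1) • t3 e1 e1 e1) = 1 := by
  have he : χ e1 = 0 := by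
    rw [e1, map_smul, map_sub, map_pow, map_one, pow_two, h]; simp
  rw [map_add, map_one, map_smul, t3, GG_tmul, he]
  simp

lemma neg_one_smul_aux {B : Type*} [Ring B] [Algebra ℂ B] (b : B) : (-1 : ℂ) • b = -b := by
  rw [neg_smul, one_smul]

/-- for `ε = ±1`, the quasi-bialgebra `(Q, Φ_ε)` with
`Φ_ε = 1⊗1⊗1 + (ε−1)·e₁⊗e₁⊗e₁` is not quasi-triangular. -/
theorem statement4 (Δ : Q →ₐ[ℂ] TP2 ℂ Q)
    (hΔE : Δ gE = (1:Q) ⊗ₜ[ℂ] gE + gE ⊗ₜ[ℂ] gK)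
    (hΔF : Δ gF = gKi ⊗ₜ[ℂ] gF + gF ⊗ₜ[ℂ] (1:Q))
    (hΔK : Δ gK = gK ⊗ₜ[ℂ] gK)
    (ep : ℂ) (hep : ep = 1 ∨ ep = -1) :
    ¬ ∃ R : TP2 ℂ Q, IsUnit R ∧
      (∀ a : Q, R * Δ a = flipA ℂ Q (Δ a) * R) ∧
      copL Δ R =
        Ring.inverse (perm231 ℂ Q (1 + (ep - 1) • t3 e1 e1 e1)) * emb13 ℂ Q R *
          perm132 ℂ Q (1 + (ep - 1) • t3 e1 e1 e1) * emb23 ℂ Q R *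
          Ring.inverse ((1 : TP3 ℂ Q) + (ep - 1) • t3 e1 e1 e1) ∧
      copR Δ R =
        perm312 ℂ Q (1 + (ep - 1) • t3 e1 e1 e1) * emb13 ℂ Q R *
          Ring.inverse (perm213 ℂ Q (1 + (ep - 1) • t3 e1 e1 e1)) * emb12 ℂ Q R *
          ((1 : TP3 ℂ Q) + (ep - 1) • t3 e1 e1 e1) := by
  rintro ⟨R, hu, hR, h1, h2⟩
  obtain ⟨p1, p2, p3, p4⟩ := perms_Phi ep
  rw [p1, p2, inverse_self_of_sq _ (PhiE_sq ep hep)] at h1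
  rw [p3, p4, inverse_self_of_sq _ (PhiE_sq ep hep)] at h2
  obtain ⟨χ1, cE, cF, cK, cKi⟩ := exists_char 1 (by norm_num)
  obtain ⟨χm, mE, mF, mK, mKi⟩ := exists_char (-1) (by norm_num)
  obtain ⟨ρ, rE, rF, rK, rKi⟩ := exists_rep
  obtain ⟨A, hA⟩ := exists_act ρ
  -- the squares of both characters are the counit
  have sq1 : ∀ a, χ1 (PP χ1 (Δ a)) = χ1 a := by
    have : (χ1.comp ((PP χ1).comp Δ)) = χ1 := by
      apply Q_hom_ext <;> simp [hΔE, hΔF, hΔK, PP_tmul, cE, cF, cK]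
    exact fun a => AlgHom.congr_fun this a
  have sqm : ∀ a, χm (PP χm (Δ a)) = χ1 a := by
    have : (χm.comp ((PP χm).comp Δ)) = χ1 := by
      apply Q_hom_ext <;> simp [hΔE, hΔF, hΔK, PP_tmul, cE, cF, cK, mE, mF, mK]
    exact fun a => AlgHom.congr_fun this a
  -- second hexagon
  have hy : PP χ1 R = 1 := by
    have h := congrArg (fun z => PP χ1 (GG χ1 z)) h2
    simp only [PP_GG_copR χ1 χ1 Δ sq1, map_mul, GG_Phi χ1 (by rw [cK]; norm_num), GG_emb13,
      GG_emb12, PP_tmul, map_one, one_mul, mul_one, one_smul] at h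
    have hy : IsUnit (PP χ1 R) := hu.map (PP χ1)
    exact (hy.mul_eq_left.mp h.symm)
  set x : Q := PP χm R with hx
  have hxx : x * x = 1 := by
    have h := congrArg (fun z => PP χm (GG χm z)) h2
    simp only [PP_GG_copR χm χ1 Δ sqm, map_mul, GG_Phi χm (by rw [mK]; norm_num), GG_emb13,
      GG_emb12, PP_tmul, map_one, one_mul, mul_one, one_smul] at h
    rw [hy] at h
    exact h.symm
  -- first hexagon
  have hΔx : Δ x = x ⊗ₜ[ℂ] x := by
    have h := congrArg (GG χm) h1
    simp only [GG_copL, map_mul, GG_Phi χm (by rw [mK]; norm_num), GG_emb13,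
      GG_emb23, one_mul, mul_one, Algebra.TensorProduct.tmul_mul_tmul] at h
    exact h
  have hex : χ1 x = 1 := by
    have h := sq1 x
    rw [hΔx, PP_tmul, map_smul, smul_eq_mul] at h
    have hsq : χ1 x * χ1 x = 1 := by rw [← map_mul, hxx, map_one]
    rw [← h, hsq]
  -- intertwining
  have hxE : x * gE = -(gE * x) := by
    have h := congrArg (PP χm) (hR gE)
    simp [hΔE, flipA, PP_tmul, mE, mK, mul_add, add_mul] at h
    rw [← hx] at h
    have h3 : (-1 : ℂ) • (x * gE) = -(x * gE) := neg_one_smul_aux (x * gE)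
    exact neg_eq_iff_eq_neg.mp (h3.symm.trans h)
  have hxF : x * gF = -(gF * x) := by
    have h := congrArg (PP χm) (hR gF)
    simp [hΔF, flipA, PP_tmul, mF, mKi, mul_add, add_mul] at h
    exact h
  -- invariant vector
  have inv : ∀ y : Q, A (Δ y) !![0, -Complex.I; 1, 0] = χ1 y • !![0, -Complex.I; 1, 0] := by
    intro y
    refine Q_induction (P := fun y => A (Δ y) !![0, -Complex.I; 1, 0]
      = χ1 y • !![0, -Complex.I; 1, 0]) ?_ ?_ ?_ ?_ ?_ ?_ y
    · intro c
      simp only [AlgHom.commutes]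
      rfl
    · rw [hΔE, cE, map_add, LinearMap.add_apply, hA, hA, map_one, rE, rK]
      ext i j
      fin_cases i <;> fin_cases j <;> simp [Matrix.mul_apply, Fin.sum_univ_two, Matrix.vecMul, dotProduct]
    · rw [hΔF, cF, map_add, LinearMap.add_apply, hA, hA, map_one, rF, rKi]
      ext i j
      fin_cases i <;> fin_cases j <;> simp [Matrix.mul_apply, Fin.sum_univ_two, Matrix.vecMul, dotProduct]
    · rw [hΔK, cK, hA, rK]
      ext i j
      fin_cases i <;> fin_cases j <;> simp [Matrix.mul_apply, Fin.sum_univ_two, Matrix.vecMul, dotProduct]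
    · intro a b ha hb
      rw [map_add, map_add, LinearMap.add_apply, ha, hb, map_add, add_smul]
    · intro a b ha hb
      rw [map_mul, map_mul, Module.End.mul_apply, hb, map_smul, ha, map_mul, smul_smul, mul_comm]
  have hfin := inv x
  rw [hΔx, hA, hex, one_smul] at hfin
  have kE := congrArg ρ hxE
  have kF := congrArg ρ hxF
  have kx := congrArg ρ hxx
  rw [map_neg, map_mul, map_mul, rE] at kE
  rw [map_neg, map_mul, map_mul, rF] at kF
  rw [map_mul, map_one] at kx
  generalize ρ x = X at hfin kE kF kx
  have a1 := congrFun (congrFun kE 0) 1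
  have a2 := congrFun (congrFun kE 0) 0
  have a3 := congrFun (congrFun kF 0) 0
  have a4 := congrFun (congrFun kx 0) 0
  have a5 := congrFun (congrFun hfin 1) 0
  simp [Matrix.mul_apply, Fin.sum_univ_two, Matrix.vecMul, dotProduct] at a1 a2 a3 a4 a5
  rw [a2, a3] at a4
  rw [a2] at a5
  have a6 : X 1 1 = - X 0 0 := by rw [a1, neg_neg]
  rw [a6] at a5
  have : (2 : ℂ) = 0 := by linear_combination -a4 - a5
  norm_num at this
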